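/- Let V be a finite-dimensional complex vector space, let Λ(V) denote the exterior algebra of V over ℂ, and for v ∈ V write ι(v) for the image of v in Λ(V). Let A, B, C be modules over Λ(V) and let f : A → B, g : B → C, h : C → A be Λ(V)-module homomorphisms forming an exact triangle, i.e. ker(g) = im(f), ker(h) = im(g), and ker(f) = im(h). Let k ≥ 0 be an integer. Suppose A has degree at most k, i.e. (ι(v₁)·ι(v₂)·…·ι(v_{k+1})) • a = 0 for all v₁, …, v_{k+1} ∈ V and all a ∈ A, and suppose C has degree 0, i.e. ι(v) • c = 0 for all v ∈ V and all c ∈ C. Then B has degree at most k+1, i.e. (ι(v₁)·ι(v₂)·…·ι(v_{k+2})) • b = 0 for all v₁, …, v_{k+2} ∈ V and all b ∈ B. -/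

import Mathlib

/-- If `A → B → C → A` is an exact triangle of modules over the exterior algebra
`Λ(V)`, `A` has degree at most `k` and `C` has degree `0`, then `B` has degree
at most `k + 1`. -/
theorem degree_of_middle_module_in_exact_triangle
    {V : Type*} [AddCommGroup V] [Module ℂ V] [FiniteDimensional ℂ V]
    {A B C : Type*}
    [AddCommGroup A] [Module (ExteriorAlgebra ℂ V) A]
    [AddCommGroup B] [Module (ExteriorAlgebra ℂ V) B]
    [AddCommGroup C] [Module (ExteriorAlgebra ℂ V) C]
    (f : A →ₗ[ExteriorAlgebra ℂ V] B) (g : B →ₗ[ExteriorAlgebra ℂ V] C)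
    (h : C →ₗ[ExteriorAlgebra ℂ V] A)
    (hfg : LinearMap.ker g = LinearMap.range f)
    (hgh : LinearMap.ker h = LinearMap.range g)
    (hhf : LinearMap.ker f = LinearMap.range h)
    (k : ℕ)
    (hA : ∀ (v : Fin (k + 1) → V) (a : A),
      ((List.ofFn fun i => ExteriorAlgebra.ι ℂ (v i)).prod) • a = 0)
    (hC : ∀ (v : V) (c : C), ExteriorAlgebra.ι ℂ v • c = 0) :
    ∀ (v : Fin (k + 2) → V) (b : B),
      ((List.ofFn fun i => ExteriorAlgebra.ι ℂ (v i)).prod) • b = 0 := by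
  intro v b
  have hmem : ExteriorAlgebra.ι ℂ (v (Fin.last (k + 1))) • b ∈ LinearMap.range f := by
    rw [← hfg, LinearMap.mem_ker, map_smul]
    exact hC _ _
  obtain ⟨a, ha⟩ := hmem
  rw [List.ofFn_succ', List.concat_eq_append, List.prod_append, List.prod_singleton,
    mul_smul, ← ha, ← map_smul, hA (fun i => v i.castSucc) a, map_zero]
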